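/- Let M ∈ ℝ^{d×d} with spectral radius ρ(M) < 1, and let Σ₀ ∈ ℝ^{d×d} be symmetric positive definite with μ := λ_min(Σ₀). Define Σ := Σ_{t≥0} Mᵗ Σ₀ (Mᵀ)ᵗ. Then for every symmetric X ∈ ℝ^{d×d}, the series Σ_{t≥0} Mᵗ X (Mᵀ)ᵗ converges and ‖Σ_{t≥0} Mᵗ X (Mᵀ)ᵗ‖ ≤ (‖Σ‖/μ)·‖X‖, where ‖·‖ denotes the spectral norm. -/

import Mathlib

/-!
Convergence: by Gelfand's formula the entries of `M ^ t` are eventually at most `r ^ t` for some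
`r < 1` (`eventually_abs_pow_apply_le`), so each entry of the series is dominated by a geometric
series (`summable_lyapunov`).

Norm bound: write `a = (M ^ t)ᵀ u` and `b = (M ^ t)ᵀ v`. Since `Σ₀ ≥ μ I` (`lamMin_mul_le`),
`|aᵀ X b| ≤ ‖X‖ (‖a‖² + ‖b‖²) / 2 ≤ (‖X‖ / μ) (aᵀ Σ₀ a + bᵀ Σ₀ b) / 2`.
Summing over `t` (`hasSum_bilin`) gives
`|uᵀ T(X) v| ≤ (‖X‖ / μ) (uᵀ Σ u + vᵀ Σ v) / 2 ≤ (‖X‖ ‖Σ‖ / μ) (‖u‖² + ‖v‖²) / 2`,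
and such a bound for all `u`, `v` is a bound on the operator norm (`specNorm_le_of_bilin`).
-/


open Matrix

noncomputable section

/-- Spectral radius of a real square matrix: the spectral radius of its complexification. -/
def specRad {n : ℕ} (M : Matrix (Fin n) (Fin n) ℝ) : ENNReal :=
  spectralRadius ℂ (M.map (algebraMap ℝ ℂ))

/-- Spectral (operator 2-) norm of a real matrix. -/
def specNorm {m n : ℕ} (M : Matrix (Fin m) (Fin n) ℝ) : ℝ :=
  ‖LinearMap.toContinuousLinearMap (Matrix.toEuclideanLin M)‖

/-- Smallest (real) eigenvalue of a matrix, as the infimum of its real spectrum. -/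
def lamMin {n : ℕ} (M : Matrix (Fin n) (Fin n) ℝ) : ℝ :=
  sInf (spectrum ℝ M)

/-- The spectral radius of the complexification controls the entries of the real powers `M ^ t`:
Gelfand's formula, read off in the `ℓ^∞` operator norm, which dominates every entry. -/
lemma eventually_abs_pow_apply_le {d : ℕ} (M : Matrix (Fin d) (Fin d) ℝ) (hρ : specRad M < 1) :
    ∃ r : ℝ, 0 ≤ r ∧ r < 1 ∧ ∀ᶠ t : ℕ in Filter.atTop, ∀ i j, |(M ^ t) i j| ≤ r ^ t := by
  let _ : NormedRing (Matrix (Fin d) (Fin d) ℂ) := Matrix.linftyOpNormedRing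
  let _ : NormedAlgebra ℂ (Matrix (Fin d) (Fin d) ℂ) := Matrix.linftyOpNormedAlgebra
  obtain ⟨r, hr, hr1⟩ := ENNReal.lt_iff_exists_nnreal_btwn.1 hρ
  have hg := spectrum.pow_nnnorm_pow_one_div_tendsto_nhds_spectralRadius
    (M.map (algebraMap ℝ ℂ))
  refine ⟨r, r.2, by exact_mod_cast hr1, ?_⟩
  filter_upwards [hg.eventually_lt_const hr, Filter.eventually_gt_atTop 0] with t ht ht0 i j
  have h1 : ‖(M.map (algebraMap ℝ ℂ)) ^ t‖₊ ≤ r ^ t := by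
    have hne : (t : ℝ) ≠ 0 := by positivity
    have := ENNReal.rpow_le_rpow ht.le (show (0 : ℝ) ≤ t by positivity)
    rw [← ENNReal.rpow_mul, one_div, inv_mul_cancel₀ hne, ENNReal.rpow_one,
      ENNReal.rpow_natCast] at this
    exact_mod_cast this
  have h2 : (M.map (algebraMap ℝ ℂ)) ^ t = (M ^ t).map (algebraMap ℝ ℂ) :=
    (map_pow (algebraMap ℝ ℂ).mapMatrix M t).symm
  have h3 : ‖((M.map (algebraMap ℝ ℂ)) ^ t) i j‖₊ ≤ ‖(M.map (algebraMap ℝ ℂ)) ^ t‖₊ := by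
    rw [Matrix.linfty_opNNNorm_def]
    exact (Finset.single_le_sum (f := fun j => ‖((M.map (algebraMap ℝ ℂ)) ^ t) i j‖₊)
      (fun _ _ => zero_le) (Finset.mem_univ j)).trans
      (Finset.le_sup (f := fun i => ∑ j, ‖((M.map (algebraMap ℝ ℂ)) ^ t) i j‖₊)
        (Finset.mem_univ i))
  have h4 := h3.trans h1
  rw [h2, Matrix.map_apply, ← NNReal.coe_le_coe] at h4
  simpa using h4

lemma summable_lyapunov {d : ℕ} (M : Matrix (Fin d) (Fin d) ℝ) (hρ : specRad M < 1)
    (X : Matrix (Fin d) (Fin d) ℝ) :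
    Summable (fun t : ℕ => M ^ t * X * (Mᵀ) ^ t) := by
  obtain ⟨r, hr0, hr1, hM⟩ := eventually_abs_pow_apply_le M hρ
  refine Pi.summable.2 fun i => Pi.summable.2 fun j => ?_
  have hs : ∀ k l, Summable fun t : ℕ => (M ^ t) i k * X k l * (M ^ t) j l := by
    intro k l
    refine Summable.of_norm_bounded_eventually_nat
      (g := fun t => |X k l| * r ^ t) ((summable_geometric_of_lt_one hr0 hr1).mul_left _) ?_
    filter_upwards [hM] with t ht
    have h1 := ht i k
    -- One factor `r ^ t` suffices for a geometric majorant; the other is bounded by `1`.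
    have h2 := (ht j l).trans (pow_le_one₀ hr0 hr1.le)
    rw [Real.norm_eq_abs, abs_mul, abs_mul]
    calc |(M ^ t) i k| * |X k l| * |(M ^ t) j l| ≤ r ^ t * |X k l| * 1 := by gcongr
      _ = _ := by ring
  have := summable_sum (s := Finset.univ) fun l _ =>
    summable_sum (s := Finset.univ) fun k _ => hs k l
  refine this.congr fun t => ?_
  simp [Matrix.mul_apply, ← Matrix.transpose_pow, Finset.sum_mul]

lemma inner_mulVec_eq {d : ℕ} (A : Matrix (Fin d) (Fin d) ℝ) (u v : EuclideanSpace ℝ (Fin d)) :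
    inner ℝ u (Matrix.toEuclideanLin A v) = u.ofLp ⬝ᵥ A *ᵥ v.ofLp := by
  simp [EuclideanSpace.inner_eq_star_dotProduct, dotProduct_comm]

/-- Cauchy–Schwarz in its arithmetic-mean form. The mean, unlike the product of the two norms,
is additive in the quadratic forms, so it survives summation over `t`. -/
lemma abs_bilin_le {d : ℕ} (A : Matrix (Fin d) (Fin d) ℝ) (a b : Fin d → ℝ) :
    |a ⬝ᵥ A *ᵥ b| ≤ specNorm A * ((a ⬝ᵥ a + b ⬝ᵥ b) / 2) := by
  have hn : ∀ c : Fin d → ℝ, c ⬝ᵥ c = ‖WithLp.toLp 2 c‖ ^ 2 := fun c => by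
    rw [EuclideanSpace.real_norm_sq_eq]; simp [dotProduct, sq]
  have h := inner_mulVec_eq A (WithLp.toLp 2 a) (WithLp.toLp 2 b)
  have h1 := abs_real_inner_le_norm (WithLp.toLp 2 a) (Matrix.toEuclideanLin A (WithLp.toLp 2 b))
  have h2 : ‖Matrix.toEuclideanLin A (WithLp.toLp 2 b)‖ ≤ specNorm A * ‖WithLp.toLp 2 b‖ :=
    (LinearMap.toContinuousLinearMap (Matrix.toEuclideanLin A)).le_opNorm _
  have h0 : 0 ≤ specNorm A := norm_nonneg _
  rw [h] at h1
  refine h1.trans ?_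
  rw [hn, hn]
  calc _ ≤ ‖WithLp.toLp 2 a‖ * (specNorm A * ‖WithLp.toLp 2 b‖) := by gcongr
    _ ≤ _ := by nlinarith [two_mul_le_add_sq ‖WithLp.toLp 2 a‖ ‖WithLp.toLp 2 b‖]

/-- Converse of `abs_bilin_le`: the arithmetic-mean bound on the bilinear form of `A` already
bounds the spectral norm, with the same constant and without symmetry of `A`. -/
lemma specNorm_le_of_bilin {d : ℕ} (A : Matrix (Fin d) (Fin d) ℝ) {c : ℝ} (hc : 0 ≤ c)
    (h : ∀ u v : Fin d → ℝ, |u ⬝ᵥ A *ᵥ v| ≤ c * ((u ⬝ᵥ u + v ⬝ᵥ v) / 2)) :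
    specNorm A ≤ c := by
  refine ContinuousLinearMap.opNorm_le_bound _ hc fun v => ?_
  have hn : ∀ x : EuclideanSpace ℝ (Fin d), x.ofLp ⬝ᵥ x.ofLp = ‖x‖ ^ 2 := fun x => by
    rw [EuclideanSpace.real_norm_sq_eq]; simp [dotProduct, sq]
  change ‖Matrix.toEuclideanLin A v‖ ≤ c * ‖v‖
  set w := Matrix.toEuclideanLin A v with hw
  rcases eq_or_ne v 0 with rfl | hv
  · simp [hw]
  rcases eq_or_ne w 0 with hw0 | hw0
  · rw [hw0, norm_zero]; positivity
  have hv' := norm_pos_iff.2 hv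
  have hw' := norm_pos_iff.2 hw0
  -- Rescale `w` to the length of `v`, so that the arithmetic mean loses nothing.
  have h1 := h ((‖v‖ / ‖w‖) • w).ofLp v.ofLp
  rw [← inner_mulVec_eq, ← hw, hn, hn, inner_smul_left, norm_smul, real_inner_self_eq_norm_sq] at h1
  have h2 := (le_abs_self _).trans h1
  simp only [conj_trivial, norm_div, norm_norm, div_mul_cancel₀ _ hw'.ne'] at h2
  have h3 : ‖v‖ / ‖w‖ * ‖w‖ ^ 2 = ‖v‖ * ‖w‖ := by field_simp
  rw [h3] at h2
  nlinarith

/-- The Rayleigh bound `S ≥ λ_min(S) I`. -/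
lemma lamMin_mul_le {d : ℕ} {S : Matrix (Fin d) (Fin d) ℝ} (hS : S.PosDef) (a : Fin d → ℝ) :
    lamMin S * (a ⬝ᵥ a) ≤ a ⬝ᵥ S *ᵥ a := by
  have hH : (S - algebraMap ℝ _ (lamMin S)).IsHermitian :=
    hS.1.sub (by simp [Matrix.IsHermitian, Matrix.algebraMap_eq_diagonal])
  have hP : (S - algebraMap ℝ _ (lamMin S)).PosSemidef := by
    rw [hH.posSemidef_iff_eigenvalues_nonneg]
    intro i
    have h1 := hH.eigenvalues_mem_spectrum_real i
    rw [← spectrum.sub_singleton_eq] at h1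
    obtain ⟨x, hx, y, hy, hxy⟩ := Set.mem_sub.1 h1
    have : lamMin S ≤ x := csInf_le (Matrix.finite_real_spectrum).bddBelow hx
    simp only [Set.mem_singleton_iff] at hy
    simp only [Pi.zero_apply]; linarith
  have := hP.dotProduct_mulVec_nonneg a
  simp [Matrix.sub_mulVec, Algebra.algebraMap_eq_smul_one, Matrix.smul_mulVec] at this
  linarith

lemma lamMin_pos {d : ℕ} [NeZero d] {S : Matrix (Fin d) (Fin d) ℝ} (hS : S.PosDef) :
    0 < lamMin S := by
  have hne : (spectrum ℝ S).Nonempty := ⟨_, hS.1.eigenvalues_mem_spectrum_real 0⟩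
  have h : lamMin S ∈ spectrum ℝ S := hne.csInf_mem Matrix.finite_real_spectrum
  rw [hS.1.spectrum_real_eq_range_eigenvalues] at h
  obtain ⟨i, hi⟩ := h
  rw [← hi]
  exact hS.eigenvalues_pos i

/-- The bilinear form of the Lyapunov series is the sum of the form of `X` along the orbits
`(M ^ t)ᵀ u`, `(M ^ t)ᵀ v`. -/
lemma hasSum_bilin {d : ℕ} (M : Matrix (Fin d) (Fin d) ℝ) (hρ : specRad M < 1)
    (X : Matrix (Fin d) (Fin d) ℝ) (u v : Fin d → ℝ) :
    HasSum (fun t : ℕ => ((M ^ t)ᵀ *ᵥ u) ⬝ᵥ X *ᵥ ((M ^ t)ᵀ *ᵥ v))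
      (u ⬝ᵥ (∑' t : ℕ, M ^ t * X * (Mᵀ) ^ t) *ᵥ v) := by
  let L : Matrix (Fin d) (Fin d) ℝ →+ ℝ :=
    { toFun := fun A => u ⬝ᵥ A *ᵥ v
      map_zero' := by simp
      map_add' := fun A B => by simp [Matrix.add_mulVec] }
  have hL : Continuous L :=
    continuous_const.dotProduct (continuous_id.matrix_mulVec continuous_const)
  refine ((summable_lyapunov M hρ X).hasSum.map L hL).congr_fun fun t => ?_
  change _ = u ⬝ᵥ (M ^ t * X * (Mᵀ) ^ t) *ᵥ v
  rw [← Matrix.transpose_pow, ← Matrix.mulVec_mulVec, ← Matrix.mulVec_mulVec,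
    Matrix.dotProduct_mulVec u, Matrix.mulVec_transpose _ u]

/-- Norm bound for the Lyapunov operator `T(X) = Σ_t Mᵗ X (Mᵀ)ᵗ`: if `ρ(M) < 1`, `Σ₀ ≻ 0`,
`μ = λ_min(Σ₀)` and `Σ = T(Σ₀)`, then for every symmetric `X` the series `T(X)` converges and
`‖T(X)‖ ≤ (‖Σ‖/μ)·‖X‖` in spectral norm. -/
theorem lyapunov_operator_norm_bound {d : ℕ} (M Sig0 : Matrix (Fin d) (Fin d) ℝ)
    (hρ : specRad M < 1) (hSig0 : Sig0.PosDef)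
    (X : Matrix (Fin d) (Fin d) ℝ) (hX : X.IsHermitian) :
    Summable (fun t : ℕ => M ^ t * X * (Mᵀ) ^ t) ∧
    specNorm (∑' t : ℕ, M ^ t * X * (Mᵀ) ^ t) ≤
      specNorm (∑' t : ℕ, M ^ t * Sig0 * (Mᵀ) ^ t) / lamMin Sig0 * specNorm X := by
  refine ⟨summable_lyapunov M hρ X, ?_⟩
  have hX0 : 0 ≤ specNorm X := norm_nonneg _
  have hS0 : 0 ≤ specNorm (∑' t : ℕ, M ^ t * Sig0 * (Mᵀ) ^ t) := norm_nonneg _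
  -- For `d = 0` the real spectrum is empty and `lamMin` is the junk value `0`, but all norms vanish.
  rcases Nat.eq_zero_or_pos d with rfl | hd
  · have h0 : ∀ A : Matrix (Fin 0) (Fin 0) ℝ, specNorm A = 0 := fun A => by
      rw [Subsingleton.elim A 0]; simp [specNorm]
    simp [h0]
  have : NeZero d := ⟨hd.ne'⟩
  have hμ := lamMin_pos hSig0
  refine specNorm_le_of_bilin _ (by positivity) fun u v => ?_
  -- `q w t` is the `t`-th term of the series for `wᵀ Σ w`; it is at least `μ ‖(Mᵗ)ᵀ w‖²`.
  set q : (Fin d → ℝ) → ℕ → ℝ := fun w t => ((M ^ t)ᵀ *ᵥ w) ⬝ᵥ Sig0 *ᵥ ((M ^ t)ᵀ *ᵥ w)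
  have hq : ∀ w, HasSum (q w) (w ⬝ᵥ (∑' t : ℕ, M ^ t * Sig0 * (Mᵀ) ^ t) *ᵥ w) :=
    fun w => hasSum_bilin M hρ Sig0 w w
  have hmaj := ((hq u).add (hq v)).mul_left (specNorm X / lamMin Sig0 / 2)
  have hterm : ∀ t : ℕ, |((M ^ t)ᵀ *ᵥ u) ⬝ᵥ X *ᵥ ((M ^ t)ᵀ *ᵥ v)| ≤
      specNorm X / lamMin Sig0 / 2 * (q u t + q v t) := by
    intro t
    have h1 := lamMin_mul_le hSig0 ((M ^ t)ᵀ *ᵥ u)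
    have h2 := lamMin_mul_le hSig0 ((M ^ t)ᵀ *ᵥ v)
    calc _ ≤ _ := abs_bilin_le X ((M ^ t)ᵀ *ᵥ u) ((M ^ t)ᵀ *ᵥ v)
      _ = specNorm X / lamMin Sig0 / 2 * (lamMin Sig0 * (((M ^ t)ᵀ *ᵥ u) ⬝ᵥ ((M ^ t)ᵀ *ᵥ u)) +
          lamMin Sig0 * (((M ^ t)ᵀ *ᵥ v) ⬝ᵥ ((M ^ t)ᵀ *ᵥ v))) := by field_simp
      _ ≤ _ := by gcongr
  have hsum := hasSum_bilin M hρ X u v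
  have hle : |u ⬝ᵥ (∑' t : ℕ, M ^ t * X * (Mᵀ) ^ t) *ᵥ v| ≤
      specNorm X / lamMin Sig0 / 2 * (u ⬝ᵥ (∑' t : ℕ, M ^ t * Sig0 * (Mᵀ) ^ t) *ᵥ u +
        v ⬝ᵥ (∑' t : ℕ, M ^ t * Sig0 * (Mᵀ) ^ t) *ᵥ v) := by
    rw [← hsum.tsum_eq]
    exact tsum_of_norm_bounded (f := fun t : ℕ => ((M ^ t)ᵀ *ᵥ u) ⬝ᵥ X *ᵥ ((M ^ t)ᵀ *ᵥ v))
      hmaj hterm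
  refine hle.trans ?_
  have hu := (le_abs_self _).trans (abs_bilin_le (∑' t : ℕ, M ^ t * Sig0 * (Mᵀ) ^ t) u u)
  have hv := (le_abs_self _).trans (abs_bilin_le (∑' t : ℕ, M ^ t * Sig0 * (Mᵀ) ^ t) v v)
  calc _ ≤ _ := mul_le_mul_of_nonneg_left (add_le_add hu hv) (by positivity)
    _ = _ := by ring
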